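/- Fix a prime power q, k ≥ 1, and j ≥ 0. For a uniformly random monic square-free polynomial f of degree n over F_q, lim_{n→∞} E[binom(X_k(f), j)] = binom(M_k(q), j) · (1/(1+q^k))^j, where X_k(f) is the number of degree-k irreducible factors of f and M_k(q) is the number of monic irreducible polynomials of degree k over F_q. -/

import Mathlib

open Filter Topology
open scoped Classical

/-- `Xdeg f k` is the number of monic irreducible factors of degree `k` of `f`
(counted without multiplicity when `f` is squarefree). -/
noncomputable def Xdeg {F : Type*} [Field F] (f : Polynomial F) (k : ℕ) : ℕ :=
  Multiset.card
    ((UniqueFactorizationMonoid.normalizedFactors f).filter fun g => g.natDegree = k)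

/-!
Let `a_P(n)` be the number of monic squarefree multiples of `P` of degree `n`. For a monic
irreducible `p` not dividing `P`, multiplication by `p` maps the polynomials counted by `a_P(n)`
and prime to `p` bijectively onto those counted by `a_{pP}(n + deg p)`, so
`a_{pP}(n + deg p) + a_{pP}(n) = a_P(n)`. After division by `q ^ n` this recurrence is contracting,
hence the density of the multiples of `pP` is that of the multiples of `P` divided by
`1 + q ^ deg p`. For `P = 1` the density is `1 - 1 / q`, because every monic polynomial is uniquely
`g ^ 2 * h` with `g`, `h` monic and `h` squarefree. So divisibilities by distinct irreducibles are
asymptotically independent, and `binom(X_k(f), j)` counts the `j`-element sets of monic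
irreducible divisors of `f` of degree `k`.
-/

open Polynomial

section Recurrence

variable {𝕜 : Type*} [NormedField 𝕜] {u : ℕ → 𝕜} {c : 𝕜} {k : ℕ} {B : ℝ}

lemma tendsto_zero_of_tendsto_shift_add_mul (hc : ‖c‖ < 1) (hu : ∀ n, ‖u n‖ ≤ B)
    (h : Tendsto (fun n ↦ u (n + k) + c * u n) atTop (𝓝 0)) : Tendsto u atTop (𝓝 0) := by
  set ℓ := limsup (fun n ↦ ‖u n‖ₑ) atTop with hℓ
  have contraction : ℓ ≤ ‖c‖ₑ * ℓ := calc
    ℓ = limsup (fun n ↦ ‖u (n + k)‖ₑ) atTop := (limsup_nat_add _ k).symm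
    _ ≤ limsup ((fun n ↦ ‖u (n + k) + c * u n‖ₑ) + fun n ↦ ‖c‖ₑ * ‖u n‖ₑ) atTop :=
      limsup_le_limsup (.of_forall fun n ↦ by
        simpa [enorm_mul] using enorm_sub_le (a := u (n + k) + c * u n) (b := c * u n))
    _ = ‖c‖ₑ * ℓ := by
      rw [ENNReal.limsup_add_of_left_tendsto_zero (by simpa using h.enorm),
        ENNReal.limsup_const_mul_of_ne_top enorm_ne_top]
  have ne_top : ℓ ≠ ⊤ := by
    refine ne_top_of_le_ne_top (b := ENNReal.ofReal B) ENNReal.ofReal_ne_top ?_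
    refine limsup_le_of_le (by isBoundedDefault) (.of_forall fun n ↦ ?_)
    rw [← ofReal_norm]
    exact ENNReal.ofReal_le_ofReal (hu n)
  have hc' : ‖c‖ₑ < 1 := by
    rw [← ofReal_norm]
    exact ENNReal.ofReal_lt_one.2 hc
  have vanishing : ℓ = 0 := by
    by_contra hne
    refine contraction.not_gt ?_
    simpa using ENNReal.mul_lt_mul_left hne ne_top hc'
  rw [tendsto_zero_iff_enorm_tendsto_zero]
  exact tendsto_of_le_liminf_of_limsup_le zero_le (hℓ ▸ vanishing).le

theorem tendsto_of_tendsto_shift_add_mul {L : 𝕜} (hc : ‖c‖ < 1) (hu : ∀ n, ‖u n‖ ≤ B)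
    (h : Tendsto (fun n ↦ u (n + k) + c * u n) atTop (𝓝 L)) :
    Tendsto u atTop (𝓝 (L / (1 + c))) := by
  have hc1 : 1 + c ≠ 0 := fun h0 ↦ by
    simp [eq_neg_of_add_eq_zero_right h0] at hc
  rw [← tendsto_sub_nhds_zero_iff] at h ⊢
  refine tendsto_zero_of_tendsto_shift_add_mul (k := k) hc
    (fun n ↦ norm_sub_le_of_le (hu n) le_rfl) (h.congr fun n ↦ ?_)
  field_simp
  ring

end Recurrence

section SquareSquarefree

theorem exists_sq_mul_squarefree {M : Type*} [CommMonoidWithZero M] [WfDvdMonoid M] {a : M}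
    (ha : a ≠ 0) : ∃ b c, Squarefree c ∧ b ^ 2 * c = a := by
  induction a using (wellFounded_dvdNotUnit (α := M)).induction with
  | _ a ih =>
  by_cases hsq : Squarefree a
  · exact ⟨1, a, hsq, by simp⟩
  obtain ⟨x, ⟨r, rfl⟩, hx⟩ : ∃ x, x * x ∣ a ∧ ¬ IsUnit x := by simpa [Squarefree] using hsq
  have hr : r ≠ 0 := right_ne_zero_of_mul ha
  obtain ⟨b, c, hc, rfl⟩ := ih r ⟨hr, x * x, by simpa using hx, mul_comm _ _⟩ hr
  exact ⟨x * b, c, hc, by rw [mul_pow, sq x, mul_assoc]⟩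

variable {R : Type*} [CommMonoidWithZero R] [UniqueFactorizationMonoid R] {a b c d : R}

lemma dvd_of_sq_dvd_sq_mul_squarefree (ha : a ≠ 0) (hc : Squarefree c)
    (h : a ^ 2 ∣ b ^ 2 * c) : a ∣ b := by
  obtain ⟨a', b', g, hrel, rfl, rfl⟩ := UniqueFactorizationMonoid.exists_reduced_factors a ha b
  have hg : g ^ 2 ≠ 0 := pow_ne_zero 2 (left_ne_zero_of_mul ha)
  rw [mul_pow, mul_pow, mul_assoc, mul_dvd_mul_iff_left hg] at h
  have ha'c : a' * a' ∣ c := sq a' ▸ (hrel.pow (m := 2) (n := 2)).dvd_of_dvd_mul_left h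
  exact mul_dvd_mul_left g (hc a' ha'c).dvd

theorem associated_of_sq_mul_squarefree_eq (ha : a ≠ 0) (hb : b ≠ 0) (hc : Squarefree c)
    (hd : Squarefree d) (h : a ^ 2 * c = b ^ 2 * d) : Associated a b :=
  associated_of_dvd_dvd (dvd_of_sq_dvd_sq_mul_squarefree ha hd ⟨c, h.symm⟩)
    (dvd_of_sq_dvd_sq_mul_squarefree hb hc ⟨d, h⟩)

lemma exists_monic_sq_mul_squarefree {F : Type*} [Field F] {f : F[X]} (hf : f.Monic) :
    ∃ g h : F[X], g.Monic ∧ h.Monic ∧ Squarefree h ∧ g ^ 2 * h = f := by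
  obtain ⟨b, c, hc, rfl⟩ := exists_sq_mul_squarefree hf.ne_zero
  have hb : b ≠ 0 := by
    rintro rfl
    exact hf.ne_zero (by simp)
  have hg : (normalize b).Monic := monic_normalize hb
  have hassoc : Associated (normalize b ^ 2) (b ^ 2) := (normalize_associated b).pow_pow
  obtain ⟨h, hh⟩ : normalize b ^ 2 ∣ b ^ 2 * c := hassoc.dvd.mul_right c
  have hhc : Associated h c := by
    refine Associated.of_mul_left (Associated.of_eq hh.symm) hassoc ?_
    exact pow_ne_zero 2 hg.ne_zero
  exact ⟨normalize b, h, hg, (hg.pow 2).of_mul_monic_left (hh ▸ hf),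
    hc.squarefree_of_dvd hhc.dvd, hh.symm⟩

end SquareSquarefree

section MonicIrreducible

variable {F : Type*} [Field F]

lemma isRelPrime_of_monic_irreducible_of_ne {p r : F[X]} (hp : p.Monic) (hpi : Irreducible p)
    (hr : r.Monic) (hri : Irreducible r) (hne : p ≠ r) : IsRelPrime p r :=
  hpi.isRelPrime_iff_not_dvd.2 fun hpr ↦
    hne (eq_of_monic_of_associated hp hr (hpi.associated_of_dvd hri hpr))

lemma prod_dvd_iff_forall_dvd {T : Finset F[X]} (hT : ∀ p ∈ T, p.Monic ∧ Irreducible p)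
    {f : F[X]} : ∏ p ∈ T, p ∣ f ↔ ∀ p ∈ T, p ∣ f := by
  refine ⟨fun h p hp ↦ (Finset.dvd_prod_of_mem _ hp).trans h,
    Finset.prod_dvd_of_isRelPrime fun p hp r hr hne ↦ ?_⟩
  exact isRelPrime_of_monic_irreducible_of_ne (hT p hp).1 (hT p hp).2 (hT r hr).1 (hT r hr).2 hne

end MonicIrreducible

section Counting

lemma finite_monic_natDegree_eq (R : Type*) [Ring R] [Nontrivial R] [Finite R] (n : ℕ) :
    {f : R[X] | f.Monic ∧ f.natDegree = n}.Finite :=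
  Set.finite_coe_iff.1 <|
    Finite.of_equiv _ ((monicEquivDegreeLT n).trans (degreeLTEquiv R n).toEquiv).symm

variable (F : Type*) [Field F] [Fintype F]

/-- The monic polynomials of degree `n` over the finite field `F`. -/
noncomputable def monics (n : ℕ) : Finset F[X] :=
  (finite_monic_natDegree_eq F n).toFinset

/-- The monic squarefree polynomials of degree `n`, the sample space of the theorem. -/
noncomputable def squarefreeMonics (n : ℕ) : Finset F[X] :=
  (monics F n).filter Squarefree

/-- The monic irreducible polynomials of degree `n`, of which there are `M_n(q)`. -/
noncomputable def irreducibleMonics (n : ℕ) : Finset F[X] :=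
  (monics F n).filter Irreducible

variable {F}

/-- The monic squarefree polynomials of degree `n` divisible by `P`; their proportion among all
monic squarefree polynomials of degree `n` is the probability that `P` divides `f`. -/
noncomputable def squarefreeMultiples (P : F[X]) (n : ℕ) : Finset F[X] :=
  (squarefreeMonics F n).filter (P ∣ ·)

variable {f g p P : F[X]} {n : ℕ}

lemma mem_monics : f ∈ monics F n ↔ f.Monic ∧ f.natDegree = n := by
  simp [monics]

lemma mem_squarefreeMonics :
    f ∈ squarefreeMonics F n ↔ f.Monic ∧ Squarefree f ∧ f.natDegree = n := by
  simp only [squarefreeMonics, Finset.mem_filter, mem_monics]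
  tauto

lemma mem_irreducibleMonics :
    f ∈ irreducibleMonics F n ↔ f.Monic ∧ Irreducible f ∧ f.natDegree = n := by
  simp only [irreducibleMonics, Finset.mem_filter, mem_monics]
  tauto

lemma mem_squarefreeMultiples :
    f ∈ squarefreeMultiples P n ↔ (f.Monic ∧ Squarefree f ∧ f.natDegree = n) ∧ P ∣ f := by
  rw [squarefreeMultiples, Finset.mem_filter, mem_squarefreeMonics]

lemma squarefreeMultiples_one : squarefreeMultiples (1 : F[X]) n = squarefreeMonics F n := by
  simp [squarefreeMultiples]

variable (F n) in
lemma card_monics : (monics F n).card = Fintype.card F ^ n := by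
  rw [← Nat.subtype_card _ fun _ ↦ mem_monics,
    Nat.card_congr ((monicEquivDegreeLT n).trans (degreeLTEquiv F n).toEquiv)]
  simp

lemma card_squarefreeMultiples_le : (squarefreeMultiples P n).card ≤ Fintype.card F ^ n := by
  rw [← card_monics]
  exact Finset.card_le_card ((Finset.filter_subset _ _).trans (Finset.filter_subset _ _))

variable (F n) in
lemma sum_card_squarefreeMonics :
    ∑ i ∈ Finset.range (n / 2 + 1), Fintype.card F ^ i * (squarefreeMonics F (n - 2 * i)).card =
      Fintype.card F ^ n := by
  simp_rw [← card_monics, ← Finset.card_product]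
  rw [← Finset.card_sigma]
  refine Finset.card_bij (fun x _ ↦ x.2.1 ^ 2 * x.2.2) ?_ ?_ ?_ <;>
    simp only [Sigma.forall, Prod.forall, Finset.mem_sigma, Finset.mem_range, Finset.mem_product,
      mem_monics, mem_squarefreeMonics]
  · rintro i g h ⟨hi, ⟨hg, rfl⟩, hh, -, hdeg⟩
    refine ⟨(hg.pow 2).mul hh, ?_⟩
    rw [(hg.pow 2).natDegree_mul hh, hg.natDegree_pow]
    omega
  · rintro _ g h ⟨-, ⟨hg, rfl⟩, -, hsq, -⟩ _ g' h' ⟨-, ⟨hg', rfl⟩, -, hsq', -⟩ heq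
    obtain rfl := eq_of_monic_of_associated hg hg'
      (associated_of_sq_mul_squarefree_eq hg.ne_zero hg'.ne_zero hsq hsq' heq)
    obtain rfl := mul_left_cancel₀ (hg.pow 2).ne_zero heq
    rfl
  · rintro f ⟨hf, hdeg⟩
    obtain ⟨g, h, hg, hh, hsq, rfl⟩ := exists_monic_sq_mul_squarefree hf
    rw [(hg.pow 2).natDegree_mul hh, hg.natDegree_pow] at hdeg
    refine ⟨⟨g.natDegree, g, h⟩, ⟨?_, ⟨hg, rfl⟩, hh, hsq, ?_⟩, rfl⟩ <;>
    · dsimp only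
      omega

variable (F n) in
theorem card_squarefreeMonics_add_two :
    Fintype.card F ^ (n + 1) + (squarefreeMonics F (n + 2)).card = Fintype.card F ^ (n + 2) := by
  rw [← sum_card_squarefreeMonics F (n + 2), show (n + 2) / 2 + 1 = n / 2 + 1 + 1 by omega,
    Finset.sum_range_succ', pow_succ', ← sum_card_squarefreeMonics F n, Finset.mul_sum]
  simp only [Nat.mul_add, Nat.mul_one, Nat.mul_zero, Nat.add_sub_add_right, Nat.sub_zero,
    pow_succ', pow_zero, one_mul, mul_assoc]

lemma mul_mem_squarefreeMultiples_iff (hp : p.Monic) (hpi : Irreducible p) :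
    p * g ∈ squarefreeMultiples (p * P) (n + p.natDegree) ↔
      g ∈ squarefreeMultiples P n ∧ ¬ p ∣ g := by
  have hmonic : (p * g).Monic ↔ g.Monic := ⟨hp.of_mul_monic_left, hp.mul⟩
  have hsq : Squarefree (p * g) ↔ ¬ p ∣ g ∧ Squarefree g := by
    rw [squarefree_mul_iff, hpi.isRelPrime_iff_not_dvd]
    exact and_congr_right fun _ ↦ and_iff_right hpi.squarefree
  have hdeg (hg : g.Monic) : (p * g).natDegree = n + p.natDegree ↔ g.natDegree = n := by
    rw [hp.natDegree_mul hg]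
    omega
  rw [mem_squarefreeMultiples, mem_squarefreeMultiples, hmonic, hsq,
    mul_dvd_mul_iff_left hp.ne_zero]
  grind

theorem card_squarefreeMultiples_mul_add (hp : p.Monic) (hpi : Irreducible p) (hpP : IsRelPrime p P)
    (n : ℕ) :
    (squarefreeMultiples (p * P) (n + p.natDegree)).card + (squarefreeMultiples (p * P) n).card =
      (squarefreeMultiples P n).card := by
  have hdvd : (squarefreeMultiples P n).filter (p ∣ ·) = squarefreeMultiples (p * P) n := by
    ext f
    have hmul : p * P ∣ f ↔ P ∣ f ∧ p ∣ f :=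
      ⟨fun h ↦ ⟨dvd_of_mul_left_dvd h, dvd_of_mul_right_dvd h⟩,
        fun h ↦ hpP.mul_dvd h.2 h.1⟩
    simp only [Finset.mem_filter, mem_squarefreeMultiples, hmul, and_assoc]
  have hnot_dvd : ((squarefreeMultiples P n).filter (¬ p ∣ ·)).card =
      (squarefreeMultiples (p * P) (n + p.natDegree)).card := by
    refine Finset.card_bij (fun g _ ↦ p * g) (fun g hg ↦ ?_)
      (fun _ _ _ _ h ↦ mul_left_cancel₀ hp.ne_zero h) (fun f hf ↦ ?_)
    · exact (mul_mem_squarefreeMultiples_iff hp hpi).2 (Finset.mem_filter.1 hg)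
    · obtain ⟨g, rfl⟩ := dvd_of_mul_right_dvd (mem_squarefreeMultiples.1 hf).2
      exact ⟨g, Finset.mem_filter.2 ((mul_mem_squarefreeMultiples_iff hp hpi).1 hf), rfl⟩
  rw [← hnot_dvd, ← hdvd, add_comm, Finset.card_filter_add_card_filter_not]

end Counting

section Density

variable {F : Type*} [Field F] [Fintype F]

variable (F) in
lemma tendsto_card_squarefreeMonics_div_pow :
    Tendsto (fun n ↦ ((squarefreeMonics F n).card : ℝ) / (Fintype.card F : ℝ) ^ n) atTop
      (𝓝 (1 - 1 / (Fintype.card F : ℝ))) := by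
  rw [← tendsto_add_atTop_iff_nat 2]
  refine tendsto_const_nhds.congr fun n ↦ ?_
  have hcount : (Fintype.card F : ℝ) ^ (n + 1) + (squarefreeMonics F (n + 2)).card =
      (Fintype.card F : ℝ) ^ (n + 2) := mod_cast card_squarefreeMonics_add_two F n
  rw [← eq_sub_iff_add_eq'] at hcount
  rw [hcount]
  field_simp
  ring

lemma tendsto_card_squarefreeMultiples_mul_div_pow {p P : F[X]} {L : ℝ} (hp : p.Monic)
    (hpi : Irreducible p) (hpP : IsRelPrime p P)
    (h : Tendsto (fun n ↦ ((squarefreeMultiples P n).card : ℝ) / (Fintype.card F : ℝ) ^ n) atTop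
      (𝓝 L)) :
    Tendsto (fun n ↦ ((squarefreeMultiples (p * P) n).card : ℝ) / (Fintype.card F : ℝ) ^ n) atTop
      (𝓝 (L / (1 + (Fintype.card F : ℝ) ^ p.natDegree))) := by
  set Q := (Fintype.card F : ℝ) ^ p.natDegree with hQ
  have hQ1 : 1 < Q := one_lt_pow₀ (mod_cast Fintype.one_lt_card) hpi.natDegree_pos.ne'
  have hlim : L / (1 + Q) = L * Q⁻¹ / (1 + Q⁻¹) := by
    field_simp
    ring
  rw [hlim]
  refine tendsto_of_tendsto_shift_add_mul (k := p.natDegree) (B := 1) ?_ (fun n ↦ ?_)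
    ((h.mul_const Q⁻¹).congr fun n ↦ ?_)
  · rw [norm_inv, Real.norm_of_nonneg (by positivity)]
    exact inv_lt_one_of_one_lt₀ hQ1
  · rw [Real.norm_of_nonneg (by positivity)]
    exact div_le_one_of_le₀ (mod_cast card_squarefreeMultiples_le) (by positivity)
  · rw [← card_squarefreeMultiples_mul_add hp hpi hpP n, pow_add, ← hQ]
    push_cast
    field_simp

lemma tendsto_card_squarefreeMultiples_prod_div_pow {T : Finset F[X]}
    (hT : ∀ p ∈ T, p.Monic ∧ Irreducible p) :
    Tendsto
      (fun n ↦ ((squarefreeMultiples (∏ p ∈ T, p) n).card : ℝ) / (Fintype.card F : ℝ) ^ n) atTop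
      (𝓝 ((1 - 1 / (Fintype.card F : ℝ)) *
        ∏ p ∈ T, 1 / (1 + (Fintype.card F : ℝ) ^ p.natDegree))) := by
  induction T using Finset.induction_on with
  | empty => simpa [squarefreeMultiples_one] using tendsto_card_squarefreeMonics_div_pow F
  | insert p T hpT ih =>
    obtain ⟨⟨hp, hpi⟩, hT⟩ := Finset.forall_mem_insert _ _ _ |>.1 hT
    rw [Finset.prod_insert hpT, Finset.prod_insert hpT, mul_left_comm, one_div_mul_eq_div]
    have hrel : IsRelPrime p (∏ r ∈ T, r) := IsRelPrime.prod_right fun r hr ↦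
      isRelPrime_of_monic_irreducible_of_ne hp hpi (hT r hr).1 (hT r hr).2 fun h ↦ hpT (h ▸ hr)
    exact tendsto_card_squarefreeMultiples_mul_div_pow hp hpi hrel (ih hT)

theorem tendsto_card_squarefreeMultiples_prod_div_card {T : Finset F[X]}
    (hT : ∀ p ∈ T, p.Monic ∧ Irreducible p) :
    Tendsto
      (fun n ↦ ((squarefreeMultiples (∏ p ∈ T, p) n).card : ℝ) / (squarefreeMonics F n).card) atTop
      (𝓝 (∏ p ∈ T, 1 / (1 + (Fintype.card F : ℝ) ^ p.natDegree))) := by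
  have hdensity : 1 - 1 / (Fintype.card F : ℝ) ≠ 0 := by
    have hq : (1 : ℝ) < Fintype.card F := mod_cast Fintype.one_lt_card
    rw [one_div]
    exact (sub_pos.2 (inv_lt_one_of_one_lt₀ hq)).ne'
  have hratio := (tendsto_card_squarefreeMultiples_prod_div_pow hT).div
    (tendsto_card_squarefreeMonics_div_pow F) hdensity
  rw [mul_div_cancel_left₀ _ hdensity] at hratio
  exact hratio.congr fun n ↦ div_div_div_cancel_right₀ (by positivity) _ _

end Density

section Moments

variable {F : Type*} [Field F] [Fintype F]

lemma Xdeg_eq_card_filter_dvd {f : F[X]} (hf : f.Monic) (hsq : Squarefree f) (k : ℕ) :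
    Xdeg f k = ((irreducibleMonics F k).filter (· ∣ f)).card := by
  have hnodup :=
    (UniqueFactorizationMonoid.squarefree_iff_nodup_normalizedFactors hf.ne_zero).1 hsq
  rw [Xdeg, ← Multiset.toFinset_card_of_nodup (hnodup.filter _)]
  congr 1
  ext p
  simp only [Multiset.mem_toFinset, Multiset.mem_filter, Finset.mem_filter, mem_irreducibleMonics,
    Polynomial.mem_normalizedFactors_iff hf.ne_zero]
  tauto

lemma monic_irreducible_of_mem_powersetCard {T : Finset F[X]} {k j : ℕ}
    (hT : T ∈ (irreducibleMonics F k).powersetCard j) : ∀ p ∈ T, p.Monic ∧ Irreducible p := by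
  intro p hp
  obtain ⟨hmonic, hirr, -⟩ := mem_irreducibleMonics.1 ((Finset.mem_powersetCard.1 hT).1 hp)
  exact ⟨hmonic, hirr⟩

lemma choose_Xdeg_eq_card_filter_prod_dvd {f : F[X]} (hf : f.Monic) (hsq : Squarefree f)
    (k j : ℕ) :
    (Xdeg f k).choose j =
      (((irreducibleMonics F k).powersetCard j).filter (∏ p ∈ ·, p ∣ f)).card := by
  rw [Xdeg_eq_card_filter_dvd hf hsq, ← Finset.card_powersetCard]
  congr 1
  ext T
  have hsubset : T ⊆ (irreducibleMonics F k).filter (· ∣ f) ↔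
      T ⊆ irreducibleMonics F k ∧ ∀ p ∈ T, p ∣ f := by
    simp only [Finset.subset_iff, Finset.mem_filter, imp_and, forall_and]
  rw [Finset.mem_powersetCard, hsubset, and_right_comm, ← Finset.mem_powersetCard,
    Finset.mem_filter]
  exact and_congr_right fun hT ↦
    (prod_dvd_iff_forall_dvd (monic_irreducible_of_mem_powersetCard hT)).symm

theorem sum_choose_Xdeg (k j n : ℕ) :
    ∑ f ∈ squarefreeMonics F n, (Xdeg f k).choose j =
      ∑ T ∈ (irreducibleMonics F k).powersetCard j, (squarefreeMultiples (∏ p ∈ T, p) n).card := by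
  have hchoose : ∀ f ∈ squarefreeMonics F n, (Xdeg f k).choose j =
      (((irreducibleMonics F k).powersetCard j).filter (∏ p ∈ ·, p ∣ f)).card := by
    intro f hf
    obtain ⟨hmonic, hsq, -⟩ := mem_squarefreeMonics.1 hf
    exact choose_Xdeg_eq_card_filter_prod_dvd hmonic hsq k j
  rw [Finset.sum_congr rfl hchoose]
  exact Finset.sum_card_bipartiteAbove_eq_sum_card_bipartiteBelow _

theorem tendsto_sum_choose_Xdeg_div_card (k j : ℕ) :
    Tendsto
      (fun n ↦ (∑ f ∈ squarefreeMonics F n, ((Xdeg f k).choose j : ℝ)) /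
        (squarefreeMonics F n).card) atTop
      (𝓝 (((irreducibleMonics F k).card.choose j : ℝ) *
        (1 / (1 + (Fintype.card F : ℝ) ^ k)) ^ j)) := by
  have hprod : ∀ T ∈ (irreducibleMonics F k).powersetCard j,
      ∏ p ∈ T, 1 / (1 + (Fintype.card F : ℝ) ^ p.natDegree) =
        (1 / (1 + (Fintype.card F : ℝ) ^ k)) ^ j := by
    intro T hT
    obtain ⟨hsub, rfl⟩ := Finset.mem_powersetCard.1 hT
    refine Finset.prod_eq_pow_card fun p hp ↦ ?_
    rw [(mem_irreducibleMonics.1 (hsub hp)).2.2]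
  rw [← Finset.card_powersetCard, ← nsmul_eq_mul, ← Finset.sum_const, ← Finset.sum_congr rfl hprod]
  refine (tendsto_finsetSum _ fun T hT ↦ tendsto_card_squarefreeMultiples_prod_div_card
    (monic_irreducible_of_mem_powersetCard hT)).congr fun n ↦ ?_
  rw [← Finset.sum_div]
  exact_mod_cast congrArg (fun m : ℕ ↦ (m : ℝ) / _) (sum_choose_Xdeg k j n).symm

end Moments

/-- Over a finite field with `q` elements, for a uniformly random monic
squarefree polynomial `f` of degree `n`,
`lim_{n→∞} E[binom(X_k(f), j)] = binom(M k, j) ⬝ (1/(1+q^k))^j`, where `X_k(f)` is the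
number of degree-`k` irreducible factors of `f` and `M k` is the number of monic
irreducible polynomials of degree `k`. -/
theorem stmt10 (F : Type*) [Field F] [Fintype F] (q : ℕ) (hq : Fintype.card F = q)
    (k : ℕ) (hk : 1 ≤ k) (j : ℕ) (M : ℕ → ℕ)
    (hM : ∀ k, M k = Nat.card {f : Polynomial F // f.Monic ∧ Irreducible f ∧
      f.natDegree = k}) :
    Tendsto
      (fun n : ℕ =>
        (∑ᶠ f ∈ {f : Polynomial F | f.Monic ∧ Squarefree f ∧ f.natDegree = n},
            ((Xdeg f k).choose j : ℝ)) /
          (Nat.card {f : Polynomial F // f.Monic ∧ Squarefree f ∧ f.natDegree = n} : ℝ))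
      atTop
      (𝓝 (((M k).choose j : ℝ) * (1 / (1 + (q : ℝ) ^ k)) ^ j)) := by
  subst hq
  have hM' : M k = (irreducibleMonics F k).card := by
    rw [hM, Nat.subtype_card _ fun _ ↦ mem_irreducibleMonics]
  rw [hM']
  refine (tendsto_sum_choose_Xdeg_div_card k j).congr fun n ↦ ?_
  have hset : {f : F[X] | f.Monic ∧ Squarefree f ∧ f.natDegree = n} = squarefreeMonics F n :=
    Set.ext fun _ ↦ mem_squarefreeMonics.symm
  rw [hset, finsum_mem_coe_finset, Nat.subtype_card _ fun _ ↦ mem_squarefreeMonics]
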